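/- arXiv:1302.1678 — 5 statements merged into one kernel-verified Lean document; each statement's English description precedes it below -/
import Mathlib

section
/- Let j ≥ 0 and let P be a real polynomial of degree j satisfying ∫₀¹ P(x) xⁿ dx = 0 for every integer 0 ≤ n < j (in particular, P may be the shifted Legendre polynomial P_j). Let E be a real normed vector space and let ψ : ℝ → E be a C^∞ map (more generally, C^j on a neighborhood of 0). Then the map h ↦ ∫₀¹ P(τ) ψ(τh) dτ is O(h^j) as h → 0⁺; i.e., there exist constants C, h₀ > 0 such that ‖∫₀¹ P(τ) ψ(τh) dτ‖ ≤ C h^j for all h ∈ (0, h₀]. -/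
open MeasureTheory Polynomial

/-- The shifted Legendre polynomial `P j`, orthonormal on `[0,1]`. -/
noncomputable def legP (j : ℕ) : ℝ → ℝ := fun x =>
  (Real.sqrt (2 * j + 1) / (Nat.factorial j)) *
    (Polynomial.derivative^[j] ((Polynomial.X ^ 2 - Polynomial.X) ^ j)).eval x

theorem taylor_aux (j : ℕ)
    {E : Type*} [NormedAddCommGroup E] [NormedSpace ℝ E]
    (ψ : ℝ → E) (hψ : ContDiff ℝ (⊤ : ℕ∞) ψ) :
    ∃ (c : ℕ → E) (M : ℝ), ∀ x ∈ Set.Icc (0:ℝ) 1,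
      ‖ψ x - ∑ k ∈ Finset.range j, x ^ k • c k‖ ≤ M * x ^ j := by
  cases j with
  | zero =>
    obtain ⟨M, hM⟩ := (isCompact_Icc (a := (0:ℝ)) (b := 1)).exists_bound_of_continuousOn
      hψ.continuous.continuousOn
    exact ⟨0, M, fun x hx => by simpa using hM x hx⟩
  | succ n =>
    have h1 : ContDiff ℝ (n + 1) ψ := hψ.of_le (by exact_mod_cast le_top)
    obtain ⟨M, hM⟩ := exists_taylor_mean_remainder_bound (n := n) (zero_le_one' ℝ)
      (h1.contDiffOn (s := Set.Icc 0 1))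
    refine ⟨fun k => ((k.factorial : ℝ)⁻¹) • iteratedDerivWithin k ψ (Set.Icc 0 1) 0, M,
      fun x hx => ?_⟩
    have := hM x hx
    rw [taylor_within_apply] at this
    simpa [smul_smul, mul_comm] using this

theorem stmt0 (j : ℕ) (P : Polynomial ℝ) (hdeg : P.degree = j)
    (horth : ∀ n : ℕ, n < j → ∫ x in (0:ℝ)..1, P.eval x * x ^ n = 0)
    {E : Type*} [NormedAddCommGroup E] [NormedSpace ℝ E] [CompleteSpace E]
    (ψ : ℝ → E) (hψ : ContDiff ℝ (⊤ : ℕ∞) ψ) :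
    ∃ C > (0:ℝ), ∃ h₀ > (0:ℝ), ∀ h : ℝ, 0 < h → h ≤ h₀ →
      ‖∫ τ in (0:ℝ)..1, P.eval τ • ψ (τ * h)‖ ≤ C * h ^ j := by
  obtain ⟨c, M, hM⟩ := taylor_aux j ψ hψ
  obtain ⟨B, hB⟩ := (isCompact_Icc (a := (0:ℝ)) (b := 1)).exists_bound_of_continuousOn
      P.continuous.continuousOn
  have hc := hψ.continuous
  have hP := P.continuous
  refine ⟨|B| * |M| + 1, by positivity, 1, one_pos, fun h h0 h1 => ?_⟩
  have hz : ∫ τ in (0:ℝ)..1, P.eval τ • ∑ k ∈ Finset.range j, (τ * h) ^ k • c k = 0 := by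
    simp_rw [Finset.smul_sum]
    rw [intervalIntegral.integral_finsetSum
      (fun i _ => Continuous.intervalIntegrable (by fun_prop) _ _)]
    refine Finset.sum_eq_zero fun k hk => ?_
    have : ∀ τ : ℝ, P.eval τ • (τ * h) ^ k • c k = (P.eval τ * τ ^ k) • (h ^ k • c k) := by
      intro τ
      rw [smul_smul, smul_smul, mul_pow, mul_assoc]
    simp_rw [this]
    rw [intervalIntegral.integral_smul_const, horth k (Finset.mem_range.1 hk), zero_smul]
  have he : ∫ τ in (0:ℝ)..1, P.eval τ • ψ (τ * h) =
      ∫ τ in (0:ℝ)..1, P.eval τ • (ψ (τ * h) - ∑ k ∈ Finset.range j, (τ * h) ^ k • c k) := by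
    simp_rw [smul_sub]
    rw [intervalIntegral.integral_sub (Continuous.intervalIntegrable (by fun_prop) _ _)
      (Continuous.intervalIntegrable (by fun_prop) _ _), hz, sub_zero]
  rw [he]
  have hb := intervalIntegral.norm_integral_le_of_norm_le_const (a := (0:ℝ)) (b := 1)
    (C := |B| * |M| * h ^ j)
    (f := fun τ => P.eval τ • (ψ (τ * h) - ∑ k ∈ Finset.range j, (τ * h) ^ k • c k)) ?_
  · have : 0 < h ^ j := by positivity
    rw [sub_zero, abs_one, mul_one] at hb
    linarith
  · intro τ hτ
    rw [Set.uIoc_of_le zero_le_one] at hτ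
    have ht0 := hτ.1
    have ht1 := hτ.2
    have e1 := hB τ ⟨ht0.le, ht1⟩
    have e2 := hM (τ * h) ⟨by positivity, by nlinarith⟩
    have e3 : (τ * h) ^ j ≤ h ^ j := pow_le_pow_left₀ (by positivity) (by nlinarith) j
    rw [norm_smul, mul_assoc]
    refine mul_le_mul (e1.trans (le_abs_self B)) ?_ (norm_nonneg _) (abs_nonneg _)
    calc _ ≤ M * (τ * h) ^ j := e2
      _ ≤ |M| * (τ * h) ^ j := by gcongr; exact le_abs_self M
      _ ≤ |M| * h ^ j := by gcongr
end

section
/- (Lemma 3 of the paper, vector-field form.) Let d ≥ 1, let g₁, g₂ : ℝ^d → ℝ^d be C^∞ maps with ⟨g₁(y), g₂(y)⟩ = 0 for every y ∈ ℝ^d, let σ : ℝ → ℝ^d be a C^∞ curve, and let s ≥ 1. Then the quantity b(h) := Σ_{j=0}^{s−1} ⟨∫₀¹ P_j(τ) g₁(σ(τh)) dτ, ∫₀¹ P_j(τ) g₂(σ(τh)) dτ⟩ is O(h^{2s}) as h → 0⁺. -/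
open MeasureTheory Polynomial
open scoped RealInnerProductSpace

/-- polynomial version of `legP` -/
noncomputable def legPoly (j : ℕ) : ℝ[X] :=
  C (Real.sqrt (2 * j + 1) / (Nat.factorial j)) * derivative^[j] ((X ^ 2 - X) ^ j)

lemma legP_eq (j : ℕ) (x : ℝ) : legP j x = (legPoly j).eval x := by
  simp [legP, legPoly]

lemma ii_poly (p : ℝ[X]) (a b : ℝ) : IntervalIntegrable (fun x => p.eval x) volume a b :=
  p.continuous.intervalIntegrable a b

lemma ibp_poly (A q : ℝ[X]) (h0 : A.eval 0 = 0) (h1 : A.eval 1 = 0) :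
    ∫ x in (0:ℝ)..1, (derivative A).eval x * q.eval x
      = - ∫ x in (0:ℝ)..1, A.eval x * (derivative q).eval x := by
  rw [intervalIntegral.integral_mul_deriv_eq_deriv_mul (fun x _ => A.hasDerivAt x)
    (fun x _ => q.hasDerivAt x) (ii_poly _ _ _) (ii_poly _ _ _)]
  simp [h0, h1]

lemma ibp_iter (j : ℕ) (k : ℕ) (hk : k ≤ j) (q : ℝ[X]) :
    ∫ x in (0:ℝ)..1, (derivative^[k] ((X ^ 2 - X : ℝ[X]) ^ j)).eval x * q.eval x
      = (-1) ^ k * ∫ x in (0:ℝ)..1, ((X ^ 2 - X : ℝ[X]) ^ j).eval x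
          * (derivative^[k] q).eval x := by
  induction k generalizing q with
  | zero => simp
  | succ k ih =>
    have hd : (X ^ 2 - X : ℝ[X]) ∣ derivative^[k] ((X ^ 2 - X : ℝ[X]) ^ j) :=
      (dvd_pow_self _ (by omega : j - k ≠ 0)).trans (pow_sub_dvd_iterate_derivative_pow _ _ _)
    obtain ⟨B, hB⟩ := hd
    rw [Function.iterate_succ_apply', ibp_poly _ _ (by rw [hB]; simp) (by rw [hB]; simp),
      ih (by omega), Function.iterate_succ_apply]
    ring

lemma beta_nat (a b : ℕ) : ∫ x in (0:ℝ)..1, x ^ a * (1 - x) ^ b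
    = (a.factorial * b.factorial : ℝ) / ((a + b + 1).factorial : ℝ) := by
  induction b generalizing a with
  | zero =>
    simp [integral_pow, Nat.factorial_succ]
    have := Nat.factorial_pos a
    field_simp
  | succ b ih =>
    have h := ibp_poly (X ^ (a+1) * (1 - X) ^ (b+1)) 1 (by simp) (by simp)
    have e : ∀ x : ℝ, (derivative (X ^ (a+1) * (1 - X : ℝ[X]) ^ (b+1))).eval x
        * (1 : ℝ[X]).eval x
        = (a + 1) * (x ^ a * (1 - x) ^ (b+1)) - (b + 1) * (x ^ (a+1) * (1 - x) ^ b) := by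
      intro x
      simp [derivative_pow]
      ring
    simp only [e] at h
    rw [intervalIntegral.integral_sub (Continuous.intervalIntegrable (by fun_prop) _ _)
      (Continuous.intervalIntegrable (by fun_prop) _ _),
      intervalIntegral.integral_const_mul, intervalIntegral.integral_const_mul, ih] at h
    simp only [derivative_one, eval_zero, mul_zero, intervalIntegral.integral_zero, neg_zero] at h
    have h' : ((a:ℝ)+1) * ∫ x in (0:ℝ)..1, x ^ a * (1 - x) ^ (b+1)
       = (b + 1) * (((a + 1).factorial * b.factorial : ℝ) / ((a + 1 + b + 1).factorial : ℝ)) := by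
      linarith
    have ha : ((a:ℝ)+1) ≠ 0 := by positivity
    apply mul_left_cancel₀ ha
    rw [h', show a + (b + 1) + 1 = a + 1 + b + 1 by ring, Nat.factorial_succ a,
      Nat.factorial_succ b]
    push_cast
    ring

lemma int_w (j : ℕ) : ∫ x in (0:ℝ)..1, ((X ^ 2 - X : ℝ[X]) ^ j).eval x
    = (-1) ^ j * ((j.factorial : ℝ) ^ 2 / ((2 * j + 1).factorial : ℝ)) := by
  have e : ∀ x : ℝ, ((X ^ 2 - X : ℝ[X]) ^ j).eval x = (-1) ^ j * (x ^ j * (1 - x) ^ j) := by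
    intro x
    simp only [eval_pow, eval_sub, eval_X]
    rw [← mul_pow, ← mul_pow]; ring
  simp only [e]
  rw [intervalIntegral.integral_const_mul, beta_nat, two_mul, sq]

lemma w_natDegree (j : ℕ) : ((X ^ 2 - X : ℝ[X]) ^ j).natDegree = 2 * j := by
  have : (X ^ 2 - X : ℝ[X]).natDegree = 2 := by compute_degree!
  rw [natDegree_pow, this, mul_comm]

lemma w_coeff (j : ℕ) : ((X ^ 2 - X : ℝ[X]) ^ j).coeff (2 * j) = 1 := by
  have h : (X ^ 2 - X : ℝ[X]).natDegree = 2 := by compute_degree!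
  have hm : (X ^ 2 - X : ℝ[X]).Monic := by
    rw [Monic, leadingCoeff, h]; simp [coeff_X]
  have := (hm.pow j)
  rwa [Monic, leadingCoeff, w_natDegree] at this

lemma legPoly_natDegree (j : ℕ) : (legPoly j).natDegree ≤ j := by
  unfold legPoly
  refine (natDegree_C_mul_le _ _).trans ((natDegree_iterate_derivative _ _).trans ?_)
  rw [w_natDegree]; omega

lemma legPoly_coeff (j : ℕ) : (legPoly j).coeff j =
    (Real.sqrt (2 * j + 1) / (Nat.factorial j)) * ((2 * j).factorial / j.factorial : ℝ) := by
  unfold legPoly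
  rw [coeff_C_mul, coeff_iterate_derivative, ← two_mul, w_coeff]
  have := Nat.factorial_mul_descFactorial (show j ≤ 2 * j by omega)
  rw [show 2 * j - j = j by omega] at this
  have hj : (j.factorial : ℝ) ≠ 0 := by positivity
  rw [← this]
  push_cast
  field_simp
  simp

lemma int_leg (j : ℕ) (q : ℝ[X]) (hq : q.natDegree ≤ j) :
    ∫ x in (0:ℝ)..1, (legPoly j).eval x * q.eval x = q.coeff j / (legPoly j).coeff j := by
  have hD : derivative^[j] q = C (j.factorial * q.coeff j) := by
    have h0 : (derivative^[j] q).natDegree = 0 := by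
      have := natDegree_iterate_derivative q j
      omega
    rw [eq_C_of_natDegree_eq_zero h0, coeff_iterate_derivative]
    simp [Nat.descFactorial_self]
  have e : ∀ x : ℝ, (legPoly j).eval x * q.eval x =
    (Real.sqrt (2 * j + 1) / (Nat.factorial j)) *
      ((derivative^[j] ((X ^ 2 - X : ℝ[X]) ^ j)).eval x * q.eval x) := by
    intro x; simp [legPoly, mul_assoc]
  simp only [e]
  rw [intervalIntegral.integral_const_mul, ibp_iter j j le_rfl, hD]
  simp only [eval_C]
  rw [intervalIntegral.integral_mul_const, int_w, legPoly_coeff, Nat.factorial_succ]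
  have hj : (j.factorial : ℝ) ≠ 0 := by positivity
  have hj2 : ((2 * j).factorial : ℝ) ≠ 0 := by positivity
  have hp : (0:ℝ) < 2 * j + 1 := by positivity
  have hs : Real.sqrt (2 * j + 1) ≠ 0 := by positivity
  have hss := Real.sq_sqrt hp.le
  have h1 : ((-1:ℝ) ^ j) * (-1) ^ j = 1 := by rw [← mul_pow]; simp
  push_cast
  rw [div_mul_div_comm, div_div_eq_mul_div, eq_div_iff (by positivity)]
  field_simp
  rw [hss]
  linear_combination (q.coeff j) * (2 * (j:ℝ) + 1) * h1

lemma legPoly_coeff_ne (j : ℕ) : (legPoly j).coeff j ≠ 0 := by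
  rw [legPoly_coeff]; positivity

lemma leg_repr (s : ℕ) (q : ℝ[X]) (hq : q.degree < s) :
    q = ∑ j ∈ Finset.range s,
      C (∫ x in (0:ℝ)..1, (legPoly j).eval x * q.eval x) * legPoly j := by
  induction s generalizing q with
  | zero =>
    simp at hq
    simp [hq]
  | succ s ih =>
    set a := q.coeff s / (legPoly s).coeff s with ha
    have hqs : q.natDegree ≤ s := by
      rw [natDegree_le_iff_coeff_eq_zero]
      intro m hm
      exact (degree_lt_iff_coeff_zero q (s + 1)).mp hq m hm
    set r := q - C a * legPoly s with hr
    have hrd : r.degree < s := by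
      rw [degree_lt_iff_coeff_zero]
      intro m hm
      rcases hm.eq_or_lt with rfl | hm
      · simp [hr, ha, legPoly_coeff_ne]
      · rw [hr, coeff_sub, coeff_C_mul, coeff_eq_zero_of_natDegree_lt (by omega),
          coeff_eq_zero_of_natDegree_lt (lt_of_le_of_lt (legPoly_natDegree s) hm)]
        simp
    have hI : ∀ j ∈ Finset.range s, ∫ x in (0:ℝ)..1, (legPoly j).eval x * q.eval x
        = ∫ x in (0:ℝ)..1, (legPoly j).eval x * r.eval x := by
      intro j hj
      have hj := Finset.mem_range.mp hj
      have e : ∀ x : ℝ, (legPoly j).eval x * q.eval x = (legPoly j).eval x * r.eval x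
          + a * ((legPoly s).eval x * (legPoly j).eval x) := by
        intro x; simp [hr]; ring
      simp only [e]
      rw [intervalIntegral.integral_add (Continuous.intervalIntegrable (by fun_prop) _ _)
        (Continuous.intervalIntegrable (by fun_prop) _ _), intervalIntegral.integral_const_mul,
        int_leg s _ ((legPoly_natDegree j).trans hj.le),
        coeff_eq_zero_of_natDegree_lt (lt_of_le_of_lt (legPoly_natDegree j) hj)]
      simp
    rw [Finset.sum_range_succ, int_leg s q hqs, Finset.sum_congr rfl
      (fun j hj => by rw [hI j hj]), ← ih r hrd]
    simp [hr, ha]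

lemma leg_repr_pow (s k : ℕ) (hk : k < s) (t : ℝ) :
    t ^ k = ∑ j ∈ Finset.range s,
      (∫ x in (0:ℝ)..1, legP j x * x ^ k) * legP j t := by
  have := leg_repr s (X ^ k) (by rw [degree_X_pow]; exact_mod_cast hk)
  have := congrArg (eval t) this
  simpa [eval_finsetSum, ← legP_eq] using this

lemma legP_cont (j : ℕ) : Continuous (legP j) := by
  rw [funext (legP_eq j)]; fun_prop

/-- Parseval against a vector-valued polynomial of degree below `s`. -/
lemma parseval {E : Type*} [NormedAddCommGroup E] [InnerProductSpace ℝ E] [CompleteSpace E]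
    (s : ℕ) (v : ℕ → E) (r : ℝ → E) (hr : Continuous r) :
    ∑ j ∈ Finset.range s, ⟪∫ τ in (0:ℝ)..1, legP j τ • ∑ k ∈ Finset.range s, τ ^ k • v k,
        ∫ τ in (0:ℝ)..1, legP j τ • r τ⟫
      = ∫ τ in (0:ℝ)..1, ⟪∑ k ∈ Finset.range s, τ ^ k • v k, r τ⟫ := by
  have hL := legP_cont
  have hin : ∀ (c : E) (f : ℝ → E), Continuous f →
      ∫ τ in (0:ℝ)..1, ⟪c, f τ⟫ = ⟪c, ∫ τ in (0:ℝ)..1, f τ⟫ := fun c f hf =>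
    (innerSL ℝ c).intervalIntegral_comp_comm (hf.intervalIntegrable _ _)
  have h1 : ∀ j, ∫ τ in (0:ℝ)..1, legP j τ • ∑ k ∈ Finset.range s, τ ^ k • v k
      = ∑ k ∈ Finset.range s, (∫ x in (0:ℝ)..1, legP j x * x ^ k) • v k := by
    intro j
    simp only [Finset.smul_sum, smul_smul]
    rw [intervalIntegral.integral_finsetSum
      (fun k _ => Continuous.intervalIntegrable (by have := hL j; fun_prop) _ _)]
    simp only [intervalIntegral.integral_smul_const]
  have h2 : ∫ τ in (0:ℝ)..1, ⟪∑ k ∈ Finset.range s, τ ^ k • v k, r τ⟫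
      = ∑ k ∈ Finset.range s, ⟪v k, ∫ τ in (0:ℝ)..1, τ ^ k • r τ⟫ := by
    simp only [sum_inner, real_inner_smul_left]
    rw [intervalIntegral.integral_finsetSum
      (fun k _ => Continuous.intervalIntegrable (by fun_prop) _ _)]
    refine Finset.sum_congr rfl fun k _ => ?_
    rw [← hin _ _ (by fun_prop)]
    simp only [real_inner_smul_right]
  rw [h2]
  simp only [h1, sum_inner, real_inner_smul_left]
  rw [Finset.sum_comm]
  refine Finset.sum_congr rfl fun k hk => ?_
  have e : ∫ τ in (0:ℝ)..1, τ ^ k • r τ = ∑ j ∈ Finset.range s,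
      (∫ x in (0:ℝ)..1, legP j x * x ^ k) • ∫ τ in (0:ℝ)..1, legP j τ • r τ := by
    have : ∀ τ : ℝ, τ ^ k • r τ = ∑ j ∈ Finset.range s,
      (∫ x in (0:ℝ)..1, legP j x * x ^ k) • (legP j τ • r τ) := by
      intro τ
      conv_lhs => rw [leg_repr_pow s k (Finset.mem_range.mp hk) τ, Finset.sum_smul]
      simp only [smul_smul]
    rw [intervalIntegral.integral_congr (fun τ _ => this τ), intervalIntegral.integral_finsetSum
      (fun j _ => Continuous.intervalIntegrable (by have := hL j; fun_prop) _ _)]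
    simp only [intervalIntegral.integral_smul]
  rw [e, inner_sum]
  simp only [real_inner_smul_right]

lemma taylor_split {E : Type*} [NormedAddCommGroup E] [NormedSpace ℝ E]
    (f : ℝ → E) (hf : ContDiff ℝ (⊤ : ℕ∞) f) (s : ℕ) (hs : 1 ≤ s) :
    ∃ (v : ℕ → E) (C : ℝ), 0 ≤ C ∧ ∀ x ∈ Set.Icc (0:ℝ) 1,
      ‖f x - ∑ k ∈ Finset.range s, x ^ k • v k‖ ≤ C * x ^ s := by
  obtain ⟨n, rfl⟩ : ∃ n, s = n + 1 := ⟨s - 1, by omega⟩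
  obtain ⟨C, hC⟩ := exists_taylor_mean_remainder_bound (f := f) (n := n) zero_le_one
    ((hf.of_le (by exact_mod_cast le_top)).contDiffOn (s := Set.Icc (0:ℝ) 1))
  refine ⟨fun k => ((k.factorial : ℝ)⁻¹) • iteratedDerivWithin k f (Set.Icc (0:ℝ) 1) 0,
    |C|, abs_nonneg _, fun x hx => ?_⟩
  have h := hC x hx
  rw [taylor_within_apply] at h
  simp only [sub_zero] at h
  simp only [smul_smul]
  simp only [mul_comm] at h ⊢
  refine h.trans ?_
  have := hx.1
  gcongr
  exact le_abs_self C

theorem stmt3 (d : ℕ) (hd : 1 ≤ d)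
    (g₁ g₂ : EuclideanSpace ℝ (Fin d) → EuclideanSpace ℝ (Fin d))
    (hg₁ : ContDiff ℝ (⊤ : ℕ∞) g₁) (hg₂ : ContDiff ℝ (⊤ : ℕ∞) g₂)
    (horth : ∀ y, ⟪g₁ y, g₂ y⟫ = 0)
    (σ : ℝ → EuclideanSpace ℝ (Fin d)) (hσ : ContDiff ℝ (⊤ : ℕ∞) σ)
    (s : ℕ) (hs : 1 ≤ s) :
    ∃ C > (0:ℝ), ∃ h₀ > (0:ℝ), ∀ h : ℝ, 0 < h → h ≤ h₀ →
      |∑ j ∈ Finset.range s,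
          ⟪∫ τ in (0:ℝ)..1, legP j τ • g₁ (σ (τ * h)),
           ∫ τ in (0:ℝ)..1, legP j τ • g₂ (σ (τ * h))⟫| ≤ C * h ^ (2 * s) := by
  have hc₁ := (hg₁.comp hσ).continuous
  have hc₂ := (hg₂.comp hσ).continuous
  obtain ⟨v₁, C₁, hC₁, hv₁⟩ := taylor_split _ (hg₁.comp hσ) s hs
  obtain ⟨v₂, C₂, hC₂, hv₂⟩ := taylor_split _ (hg₂.comp hσ) s hs
  simp only [Function.comp_def] at hc₁ hc₂ hv₁ hv₂
  have hB : ∀ j, ∃ B : ℝ, ∀ x ∈ Set.Icc (0:ℝ) 1, ‖legP j x‖ ≤ B := fun j =>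
    isCompact_Icc.exists_bound_of_continuousOn (legP_cont j).continuousOn
  choose B hB using hB
  have hB0 : ∀ j, 0 ≤ B j := fun j => (norm_nonneg _).trans (hB j 0 (by simp))
  refine ⟨C₁ * C₂ + ∑ j ∈ Finset.range s, (B j * C₁) * (B j * C₂) + 1, ?_, 1, one_pos, ?_⟩
  · have : 0 ≤ ∑ j ∈ Finset.range s, (B j * C₁) * (B j * C₂) := Finset.sum_nonneg fun j _ => by
      have := hB0 j; positivity
    positivity
  intro h h0 h1
  set p₁ : ℝ → EuclideanSpace ℝ (Fin d) :=
    fun τ => ∑ k ∈ Finset.range s, τ ^ k • (h ^ k • v₁ k) with hp₁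
  set p₂ : ℝ → EuclideanSpace ℝ (Fin d) :=
    fun τ => ∑ k ∈ Finset.range s, τ ^ k • (h ^ k • v₂ k) with hp₂
  set r₁ : ℝ → EuclideanSpace ℝ (Fin d) := fun τ => g₁ (σ (τ * h)) - p₁ τ with hr₁
  set r₂ : ℝ → EuclideanSpace ℝ (Fin d) := fun τ => g₂ (σ (τ * h)) - p₂ τ with hr₂
  have cp₁ : Continuous p₁ := by rw [hp₁]; fun_prop
  have cp₂ : Continuous p₂ := by rw [hp₂]; fun_prop
  have cg₁ : Continuous fun τ : ℝ => g₁ (σ (τ * h)) :=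
    hc₁.comp (continuous_id.mul continuous_const)
  have cg₂ : Continuous fun τ : ℝ => g₂ (σ (τ * h)) :=
    hc₂.comp (continuous_id.mul continuous_const)
  have cr₁ : Continuous r₁ := cg₁.sub cp₁
  have cr₂ : Continuous r₂ := cg₂.sub cp₂
  have bd : ∀ (g : EuclideanSpace ℝ (Fin d) → EuclideanSpace ℝ (Fin d))
      (v : ℕ → EuclideanSpace ℝ (Fin d)) (C : ℝ), 0 ≤ C →
      (∀ x ∈ Set.Icc (0:ℝ) 1, ‖g (σ x) - ∑ k ∈ Finset.range s, x ^ k • v k‖ ≤ C * x ^ s) →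
      ∀ τ ∈ Set.Icc (0:ℝ) 1,
        ‖g (σ (τ * h)) - ∑ k ∈ Finset.range s, τ ^ k • (h ^ k • v k)‖ ≤ C * h ^ s := by
    intro g v C hC hv τ hτ
    have h3 : τ * h ≤ h := by nlinarith [hτ.2]
    have h4 : 0 ≤ τ * h := mul_nonneg hτ.1 h0.le
    have := hv (τ * h) ⟨h4, h3.trans h1⟩
    simp only [mul_pow, ← smul_smul] at this
    refine this.trans ?_
    rw [← mul_pow]
    gcongr
  have br₁ : ∀ τ ∈ Set.Icc (0:ℝ) 1, ‖r₁ τ‖ ≤ C₁ * h ^ s := bd g₁ v₁ C₁ hC₁ hv₁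
  have br₂ : ∀ τ ∈ Set.Icc (0:ℝ) 1, ‖r₂ τ‖ ≤ C₂ * h ^ s := bd g₂ v₂ C₂ hC₂ hv₂
  have mem : ∀ τ : ℝ, τ ∈ Set.uIoc (0:ℝ) 1 → τ ∈ Set.Icc (0:ℝ) 1 := by
    intro τ hτ
    rw [Set.uIoc_of_le zero_le_one] at hτ
    exact ⟨hτ.1.le, hτ.2⟩
  have bc : ∀ (r : ℝ → EuclideanSpace ℝ (Fin d)) (C : ℝ),
      (∀ τ ∈ Set.Icc (0:ℝ) 1, ‖r τ‖ ≤ C * h ^ s) → ∀ j,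
      ‖∫ τ in (0:ℝ)..1, legP j τ • r τ‖ ≤ (B j * C) * h ^ s := by
    intro r C hr j
    have := intervalIntegral.norm_integral_le_of_norm_le_const (a := (0:ℝ)) (b := 1)
      (f := fun τ => legP j τ • r τ) (C := B j * (C * h ^ s)) (fun τ hτ => by
        rw [norm_smul]
        exact mul_le_mul (hB j τ (mem τ hτ)) (hr τ (mem τ hτ)) (norm_nonneg _) (hB0 j))
    simpa [mul_assoc] using this
  have split : ∀ (g p r : ℝ → EuclideanSpace ℝ (Fin d)), Continuous p → Continuous r →
      (∀ τ, g τ = p τ + r τ) → ∀ j, ∫ τ in (0:ℝ)..1, legP j τ • g τ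
        = (∫ τ in (0:ℝ)..1, legP j τ • p τ) + ∫ τ in (0:ℝ)..1, legP j τ • r τ := by
    intro g p r hp hr hg j
    have := legP_cont j
    simp only [hg, smul_add]
    exact intervalIntegral.integral_add (Continuous.intervalIntegrable (by fun_prop) _ _)
      (Continuous.intervalIntegrable (by fun_prop) _ _)
  have e₁ : ∀ τ, g₁ (σ (τ * h)) = p₁ τ + r₁ τ := fun τ => by simp [hr₁]
  have e₂ : ∀ τ, g₂ (σ (τ * h)) = p₂ τ + r₂ τ := fun τ => by simp [hr₂]
  have P12 := parseval s (fun k => h ^ k • v₁ k) (fun τ => p₂ τ + r₂ τ) (cp₂.add cr₂)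
  have P21 := parseval s (fun k => h ^ k • v₂ k) r₁ cr₁
  have key : ∑ j ∈ Finset.range s,
          ⟪∫ τ in (0:ℝ)..1, legP j τ • g₁ (σ (τ * h)),
           ∫ τ in (0:ℝ)..1, legP j τ • g₂ (σ (τ * h))⟫
      = - (∫ τ in (0:ℝ)..1, ⟪r₁ τ, r₂ τ⟫) + ∑ j ∈ Finset.range s,
          ⟪∫ τ in (0:ℝ)..1, legP j τ • r₁ τ, ∫ τ in (0:ℝ)..1, legP j τ • r₂ τ⟫ := by
    have A : ∑ j ∈ Finset.range s,
          ⟪∫ τ in (0:ℝ)..1, legP j τ • g₁ (σ (τ * h)),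
           ∫ τ in (0:ℝ)..1, legP j τ • g₂ (σ (τ * h))⟫
        = (∫ τ in (0:ℝ)..1, ⟪p₁ τ, p₂ τ + r₂ τ⟫) + (∫ τ in (0:ℝ)..1, ⟪p₂ τ, r₁ τ⟫)
          + ∑ j ∈ Finset.range s,
          ⟪∫ τ in (0:ℝ)..1, legP j τ • r₁ τ, ∫ τ in (0:ℝ)..1, legP j τ • r₂ τ⟫ := by
      rw [← P12, ← P21, ← Finset.sum_add_distrib, ← Finset.sum_add_distrib]
      refine Finset.sum_congr rfl fun j _ => ?_
      rw [split _ p₁ r₁ cp₁ cr₁ e₁ j, split _ p₂ r₂ cp₂ cr₂ e₂ j,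
        split (fun τ => p₂ τ + r₂ τ) p₂ r₂ cp₂ cr₂ (fun _ => rfl) j]
      change _ = ⟪∫ τ in (0:ℝ)..1, legP j τ • p₁ τ, _⟫
        + ⟪∫ τ in (0:ℝ)..1, legP j τ • p₂ τ, _⟫ + _
      rw [real_inner_comm (∫ τ in (0:ℝ)..1, legP j τ • r₁ τ)
        (∫ τ in (0:ℝ)..1, legP j τ • p₂ τ)]
      simp only [inner_add_left, inner_add_right]
      ring
    have Z : (∫ τ in (0:ℝ)..1, ⟪p₁ τ, p₂ τ + r₂ τ⟫) + (∫ τ in (0:ℝ)..1, ⟪p₂ τ, r₁ τ⟫)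
        = - (∫ τ in (0:ℝ)..1, ⟪r₁ τ, r₂ τ⟫) := by
      rw [← intervalIntegral.integral_add (Continuous.intervalIntegrable (by fun_prop) _ _)
        (Continuous.intervalIntegrable (by fun_prop) _ _), ← intervalIntegral.integral_neg]
      refine intervalIntegral.integral_congr fun τ _ => ?_
      have := horth (σ (τ * h))
      rw [e₁, e₂] at this
      simp only [inner_add_left, inner_add_right] at this ⊢
      rw [real_inner_comm (r₁ τ) (p₂ τ)]
      linarith
    rw [A, Z]
  rw [key]
  have hpow : h ^ (2 * s) = h ^ s * h ^ s := by rw [two_mul, pow_add]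
  have I1 : |∫ τ in (0:ℝ)..1, ⟪r₁ τ, r₂ τ⟫| ≤ C₁ * C₂ * h ^ (2 * s) := by
    have := intervalIntegral.norm_integral_le_of_norm_le_const (a := (0:ℝ)) (b := 1)
      (f := fun τ => ⟪r₁ τ, r₂ τ⟫) (C := (C₁ * h ^ s) * (C₂ * h ^ s)) (fun τ hτ =>
        (norm_inner_le_norm _ _).trans
          (mul_le_mul (br₁ τ (mem τ hτ)) (br₂ τ (mem τ hτ)) (norm_nonneg _) (by positivity)))
    rw [Real.norm_eq_abs, sub_zero, abs_one, mul_one] at this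
    rw [hpow]
    linarith
  have I2 : |∑ j ∈ Finset.range s,
      ⟪∫ τ in (0:ℝ)..1, legP j τ • r₁ τ, ∫ τ in (0:ℝ)..1, legP j τ • r₂ τ⟫|
      ≤ (∑ j ∈ Finset.range s, (B j * C₁) * (B j * C₂)) * h ^ (2 * s) := by
    rw [Finset.sum_mul]
    refine (Finset.abs_sum_le_sum_abs _ _).trans (Finset.sum_le_sum fun j _ => ?_)
    have hb := hB0 j
    have := (abs_real_inner_le_norm (∫ τ in (0:ℝ)..1, legP j τ • r₁ τ)
      (∫ τ in (0:ℝ)..1, legP j τ • r₂ τ)).trans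
      (mul_le_mul (bc r₁ C₁ br₁ j) (bc r₂ C₂ br₂ j) (norm_nonneg _) (by positivity))
    rw [hpow]
    linarith
  have h5 : 0 ≤ h ^ (2 * s) := by positivity
  refine (abs_add_le _ _).trans ?_
  rw [abs_neg]
  linarith
end

section
/- (Lemma 4 of the paper.) Let d ≥ 1, let g₁, g₂ : ℝ^d → ℝ^d be C^∞ maps, let σ : ℝ → ℝ^d be a C^∞ curve, let s ≥ 1 and 1 ≤ ν < s. Then for every index j with s − ν ≤ j ≤ s − 1, the quantity h^{2(s−1−j)} · ⟨∫₀¹ P_j(τ) g₁(σ(τh)) dτ, ∫₀¹ P_j(τ) g₂(σ(τh)) dτ⟩ is O(h^{2s−2}) as h → 0⁺. In particular, every entry of the ν×ν matrix Γ(h) whose (i, j-indexed) columns are built from these quantities is O(h^{2s−2}). -/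
open MeasureTheory Polynomial
open scoped RealInnerProductSpace

lemma legAux_van (j k : ℕ) (hk : k < j) (a : ℝ) (ha : a = 0 ∨ a = 1) :
    (Polynomial.derivative^[k] ((Polynomial.X ^ 2 - Polynomial.X : ℝ[X]) ^ j)).eval a = 0 := by
  have h := Polynomial.pow_sub_dvd_iterate_derivative_of_pow_dvd (q := (Polynomial.X ^ 2 - Polynomial.X : ℝ[X]))
    (n := j) k (dvd_refl _)
  obtain ⟨r, hr⟩ := h
  rw [hr]
  have : j - k ≠ 0 := by omega
  rcases ha with rfl | rfl <;> simp [this]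

lemma legAux_parts {E : Type*} [NormedAddCommGroup E] [NormedSpace ℝ E] [CompleteSpace E]
    (j : ℕ) (h : ℝ) (k : ℕ) : k ≤ j → ∀ f : ℝ → E, ContDiff ℝ (⊤ : ℕ∞) f →
    ∫ τ in (0:ℝ)..1, (Polynomial.derivative^[k] ((Polynomial.X ^ 2 - Polynomial.X : ℝ[X]) ^ j)).eval τ • f (τ * h)
      = (-h) ^ k • ∫ τ in (0:ℝ)..1, ((Polynomial.X ^ 2 - Polynomial.X : ℝ[X]) ^ j).eval τ • (deriv^[k] f) (τ * h) := by
  induction k with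
  | zero => intro _ f hf; simp
  | succ k ih =>
    intro hk f hf
    have hf' : ContDiff ℝ (⊤ : ℕ∞) (deriv f) := by
      have := (contDiff_infty_iff_deriv (f := f)).1 hf
      exact this.2
    have hd : ∀ x, HasDerivAt (fun τ : ℝ => f (τ * h)) (h • deriv f (x * h)) x := by
      intro x
      have h1 : HasDerivAt f (deriv f (x * h)) (x * h) :=
        ((hf.differentiable (by simp)) _).hasDerivAt
      have h2 : HasDerivAt (fun τ : ℝ => τ * h) h x := by
        simpa using (hasDerivAt_id x).mul_const h
      exact h1.scomp x h2
    have hc : Continuous (fun x : ℝ => h • deriv f (x * h)) := by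
      have := hf'.continuous
      fun_prop
    set q := Polynomial.derivative^[k] ((Polynomial.X ^ 2 - Polynomial.X : ℝ[X]) ^ j) with hq
    have hp := intervalIntegral.integral_smul_deriv_eq_deriv_smul (a := (0:ℝ)) (b := 1)
      (u := fun x => q.eval x) (u' := fun x => (derivative q).eval x)
      (v := fun τ : ℝ => f (τ * h)) (v' := fun x => h • deriv f (x * h))
      (fun x _ => q.hasDerivAt x) (fun x _ => hd x)
      ((derivative q).continuous.intervalIntegrable _ _) (hc.intervalIntegrable _ _)
    rw [hq, legAux_van j k (by omega) 0 (Or.inl rfl), legAux_van j k (by omega) 1 (Or.inr rfl), ← hq] at hp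
    have hI := ih (by omega) (deriv f) hf'
    rw [Function.iterate_succ_apply', Function.iterate_succ_apply, ← hq]
    rw [pow_succ', mul_smul, ← hI]
    simp only [zero_smul, sub_zero, zero_sub] at hp
    rw [← neg_eq_iff_eq_neg] at hp
    rw [← hp, neg_smul, ← intervalIntegral.integral_smul]
    congr 1
    apply intervalIntegral.integral_congr
    intro x _
    simp only [smul_smul, mul_comm]

lemma legAux_bound {E : Type*} [NormedAddCommGroup E] [NormedSpace ℝ E] [CompleteSpace E]
    (j : ℕ) (f : ℝ → E) (hf : ContDiff ℝ (⊤ : ℕ∞) f) :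
    ∃ C > (0:ℝ), ∀ h : ℝ, 0 < h → h ≤ 1 →
      ‖∫ τ in (0:ℝ)..1, legP j τ • f (τ * h)‖ ≤ C * h ^ j := by
  have hc : Continuous (deriv^[j] f) := (hf.iterate_deriv j).continuous
  obtain ⟨M, hM⟩ := (isCompact_Icc (a := (0:ℝ)) (b := 1)).exists_bound_of_continuousOn hc.continuousOn
  obtain ⟨K, hK⟩ := (isCompact_Icc (a := (0:ℝ)) (b := 1)).exists_bound_of_continuousOn
    ((Polynomial.X ^ 2 - Polynomial.X : ℝ[X]) ^ j).continuous.continuousOn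
  set c := Real.sqrt (2 * j + 1) / (Nat.factorial j) with hcdef
  have hM0 : 0 ≤ M := (norm_nonneg _).trans (hM 0 (by simp))
  have hK0 : 0 ≤ K := (norm_nonneg _).trans (hK 0 (by simp))
  refine ⟨|c| * (K * M) + 1, by positivity, fun h h0 h1 => ?_⟩
  simp only [legP, ← hcdef, mul_smul]
  rw [intervalIntegral.integral_smul, legAux_parts j h j le_rfl f hf, norm_smul, norm_smul]
  have hb : ‖∫ τ in (0:ℝ)..1, ((Polynomial.X ^ 2 - Polynomial.X : ℝ[X]) ^ j).eval τ • (deriv^[j] f) (τ * h)‖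
      ≤ K * M := by
    have := intervalIntegral.norm_integral_le_of_norm_le_const (a := (0:ℝ)) (b := 1) (C := K * M)
      (f := fun τ => ((Polynomial.X ^ 2 - Polynomial.X : ℝ[X]) ^ j).eval τ • (deriv^[j] f) (τ * h)) ?_
    · simpa using this
    · intro x hx
      rw [Set.uIoc_of_le zero_le_one] at hx
      rw [norm_smul]
      exact mul_le_mul (hK x ⟨hx.1.le, hx.2⟩)
        (hM _ ⟨mul_nonneg hx.1.le h0.le, mul_le_one₀ hx.2 h0.le h1⟩) (norm_nonneg _) hK0
  have hn : ‖(-h) ^ j‖ = h ^ j := by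
    rw [norm_pow, norm_neg, Real.norm_of_nonneg h0.le]
  rw [hn, Real.norm_eq_abs]
  have hp : 0 < h ^ j := by positivity
  calc |c| * (h ^ j * _) ≤ |c| * (h ^ j * (K * M)) := by gcongr
    _ ≤ (|c| * (K * M) + 1) * h ^ j := by nlinarith

/-- Lemma 4 of the paper.  For `C^∞` maps `g₁, g₂ : ℝ^d → ℝ^d`, a `C^∞`
curve `σ`, `s ≥ 1`, `1 ≤ ν < s`, and every `j` with `s - ν ≤ j ≤ s - 1`, the quantity
`h^{2(s-1-j)} ⟨∫₀¹ P_j(τ) g₁(σ(τh)) dτ, ∫₀¹ P_j(τ) g₂(σ(τh)) dτ⟩` (an arbitrary entry of the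
matrix `Γ(h)`) is `O(h^{2s-2})` as `h → 0⁺`. -/
theorem stmt4 (d : ℕ) (hd : 1 ≤ d)
    (g₁ g₂ : EuclideanSpace ℝ (Fin d) → EuclideanSpace ℝ (Fin d))
    (hg₁ : ContDiff ℝ (⊤ : ℕ∞) g₁) (hg₂ : ContDiff ℝ (⊤ : ℕ∞) g₂)
    (σ : ℝ → EuclideanSpace ℝ (Fin d)) (hσ : ContDiff ℝ (⊤ : ℕ∞) σ)
    (s ν : ℕ) (hν : 1 ≤ ν) (hνs : ν < s)
    (j : ℕ) (hj₁ : s - ν ≤ j) (hj₂ : j ≤ s - 1) :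
    ∃ C > (0:ℝ), ∃ h₀ > (0:ℝ), ∀ h : ℝ, 0 < h → h ≤ h₀ →
      |h ^ (2 * (s - 1 - j)) *
          ⟪∫ τ in (0:ℝ)..1, legP j τ • g₁ (σ (τ * h)),
           ∫ τ in (0:ℝ)..1, legP j τ • g₂ (σ (τ * h))⟫| ≤ C * h ^ (2 * s - 2) := by
  obtain ⟨C₁, hC₁, H₁⟩ := legAux_bound j (fun t => g₁ (σ t)) (hg₁.comp hσ)
  obtain ⟨C₂, hC₂, H₂⟩ := legAux_bound j (fun t => g₂ (σ t)) (hg₂.comp hσ)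
  refine ⟨C₁ * C₂, by positivity, 1, one_pos, fun h h0 h1 => ?_⟩
  have hpow : h ^ (2 * s - 2) = h ^ (2 * (s - 1 - j)) * (h ^ j * h ^ j) := by
    rw [← pow_add, ← pow_add]; congr 1; omega
  rw [abs_mul, abs_of_pos (pow_pos h0 _), hpow]
  have := (abs_real_inner_le_norm (∫ τ in (0:ℝ)..1, legP j τ • g₁ (σ (τ * h)))
    (∫ τ in (0:ℝ)..1, legP j τ • g₂ (σ (τ * h)))).trans
    (mul_le_mul (H₁ h h0 h1) (H₂ h h0 h1) (norm_nonneg _) (by positivity))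
  calc _ ≤ h ^ (2 * (s - 1 - j)) * (C₁ * h ^ j * (C₂ * h ^ j)) := by gcongr
    _ = _ := by ring
end

section
/- (Conservation of the additional invariants at the continuous level, eq. (14) of the paper.) Let m ≥ 1, d = 2m, let L : ℝ^d → ℝ^ν be C¹ with Jacobian matrix ∇L(y)^T ∈ ℝ^{ν×d}, let h > 0, s > ν ≥ 1, and let γ̄₀, …, γ̄_{s−1} ∈ ℝ^d be arbitrary vectors. Define η_j = 1 for 0 ≤ j ≤ s−ν−1 and η_j = 1 − h^{2(s−1−j)} α_j for s−ν ≤ j ≤ s−1, where the reals α_j satisfy Σ_{j=s−ν}^{s−1} h^{2(s−1−j)} α_j · φ_j^T γ̄_j = Σ_{j=0}^{s−1} φ_j^T γ̄_j, with φ_j = ∫₀¹ P_j(τ) ∇L(σ(τh)) dτ ∈ ℝ^{d×ν}. If σ : [0, h] → ℝ^d is a C¹ curve satisfying σ'(ch) = Σ_{j=0}^{s−1} P_j(c) η_j γ̄_j for all c ∈ [0,1], then L(σ(h)) = L(σ(0)). -/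
open MeasureTheory Polynomial
open scoped RealInnerProductSpace

/-- conservation of the additional invariants at the continuous level,
eq. (14).  Let `L : ℝ^d → ℝ^ν` be `C¹` (given by its `ν` components), `γ̄₀, …, γ̄_{s-1}`
arbitrary, `η_j = 1` for `j ≤ s-ν-1` and `η_j = 1 - h^{2(s-1-j)} α_j` otherwise, where the
`α_j` solve `∑_{j=s-ν}^{s-1} h^{2(s-1-j)} α_j φ_jᵀ γ̄_j = ∑_{j=0}^{s-1} φ_jᵀ γ̄_j` with
`φ_j = ∫₀¹ P_j(τ) ∇L(σ(τh)) dτ`.  If `σ'(ch) = ∑_{j<s} P_j(c) η_j γ̄_j` on `[0,1]`, then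
`L(σ(h)) = L(σ(0))`. -/
theorem stmt8 (m : ℕ) (hm : 1 ≤ m) (ν s : ℕ) (hν : 1 ≤ ν) (hνs : ν < s)
    (L : Fin ν → EuclideanSpace ℝ (Fin (2 * m)) → ℝ) (hL : ∀ i, ContDiff ℝ 1 (L i))
    (h : ℝ) (hh : 0 < h)
    (γb : ℕ → EuclideanSpace ℝ (Fin (2 * m)))
    (σ : ℝ → EuclideanSpace ℝ (Fin (2 * m)))
    (φ : ℕ → Fin ν → EuclideanSpace ℝ (Fin (2 * m)))
    (hφ : ∀ j i, φ j i = ∫ τ in (0:ℝ)..1, legP j τ • gradient (L i) (σ (τ * h)))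
    (α : ℕ → ℝ)
    (hα : ∀ i : Fin ν,
      ∑ j ∈ Finset.Ico (s - ν) s, h ^ (2 * (s - 1 - j)) * α j * ⟪φ j i, γb j⟫ =
      ∑ j ∈ Finset.range s, ⟪φ j i, γb j⟫)
    (η : ℕ → ℝ)
    (hη₁ : ∀ j, j ≤ s - ν - 1 → η j = 1)
    (hη₂ : ∀ j, s - ν ≤ j → j ≤ s - 1 → η j = 1 - h ^ (2 * (s - 1 - j)) * α j)
    (hσ' : ∀ c ∈ Set.Icc (0:ℝ) 1,
      HasDerivAt σ (∑ j ∈ Finset.range s, legP j c • (η j • γb j)) (c * h)) :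
    ∀ i : Fin ν, L i (σ h) = L i (σ 0) := by
  intro i
  -- continuity facts
  have hP : ∀ j, Continuous (legP j) := fun j => by
    unfold legP
    exact continuous_const.mul (Polynomial.continuous _)
  have hgrad : Continuous (gradient (L i)) := by
    unfold gradient
    exact (LinearIsometryEquiv.continuous _).comp ((hL i).continuous_fderiv one_ne_zero)
  have hs : ContinuousOn (fun τ : ℝ => σ (τ * h)) (Set.Icc 0 1) := by
    intro c hc
    have h1 : ContinuousAt (fun τ : ℝ => σ (τ * h)) c :=
      ContinuousAt.comp (f := fun τ : ℝ => τ * h) (g := σ) (hσ' c hc).continuousAt (by fun_prop)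
    exact h1.continuousWithinAt
  have hgs : ContinuousOn (fun τ : ℝ => gradient (L i) (σ (τ * h))) (Set.Icc 0 1) :=
    hgrad.comp_continuousOn hs
  have hv : ∀ j, ContinuousOn (fun τ : ℝ => legP j τ • gradient (L i) (σ (τ * h)))
      (Set.uIcc 0 1) := fun j => by
    rw [Set.uIcc_of_le zero_le_one]
    exact (hP j).continuousOn.smul hgs
  have hint : ∀ j, IntervalIntegrable (fun τ : ℝ => legP j τ • gradient (L i) (σ (τ * h)))
      volume 0 1 := fun j => (hv j).intervalIntegrable
  -- inner products with the coefficients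
  have hin : ∀ j, ⟪φ j i, γb j⟫
      = ∫ τ in (0:ℝ)..1, ⟪legP j τ • gradient (L i) (σ (τ * h)), γb j⟫ := fun j => by
    rw [hφ, real_inner_comm]
    have := (innerSL ℝ (γb j)).intervalIntegral_comp_comm (hint j)
    simp only [innerSL_apply_apply] at this
    rw [← this]
    exact intervalIntegral.integral_congr fun τ _ => real_inner_comm _ _
  have hcont : ∀ j, ContinuousOn
      (fun τ : ℝ => ⟪legP j τ • gradient (L i) (σ (τ * h)), γb j⟫) (Set.uIcc 0 1) :=
    fun j => (hv j).inner continuousOn_const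
  -- the derivative of `L` along the curve
  have hder : ∀ c ∈ Set.uIcc (0:ℝ) 1, HasDerivAt (fun τ : ℝ => L i (σ (τ * h)))
      (∑ j ∈ Finset.range s,
        h * η j * ⟪legP j c • gradient (L i) (σ (c * h)), γb j⟫) c := by
    intro c hc
    rw [Set.uIcc_of_le zero_le_one] at hc
    have h1 : HasDerivAt (fun τ : ℝ => τ * h) h c := by
      simpa using (hasDerivAt_id c).mul_const h
    have h2 := HasDerivAt.scomp c (hσ' c hc) h1
    have h3 : HasFDerivAt (L i) _ (σ (c * h)) :=
      (((hL i).differentiable one_ne_zero) (σ (c * h))).hasGradientAt.hasFDerivAt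
    have h4 := HasFDerivAt.comp_hasDerivAt c h3 h2
    refine h4.congr_deriv ?_
    simp only [InnerProductSpace.toDual_apply_apply, inner_smul_right, inner_sum,
      Finset.mul_sum, real_inner_smul_left]
    exact Finset.sum_congr rfl fun j _ => by ring
  have hFTC := intervalIntegral.integral_eq_sub_of_hasDerivAt hder
    (ContinuousOn.intervalIntegrable
      (continuousOn_finsetSum _ fun j _ => continuousOn_const.mul (hcont j)))
  have hterm : ∀ j ∈ Finset.range s, IntervalIntegrable
      (fun τ : ℝ => h * η j * ⟪legP j τ • gradient (L i) (σ (τ * h)), γb j⟫) volume 0 1 :=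
    fun j _ => (continuousOn_const.mul (hcont j)).intervalIntegrable
  rw [intervalIntegral.integral_finsetSum hterm] at hFTC
  simp only [intervalIntegral.integral_const_mul, ← hin, one_mul, zero_mul] at hFTC
  -- the algebraic cancellation
  have hzero : ∑ j ∈ Finset.range s, h * η j * ⟪φ j i, γb j⟫ = 0 := by
    have hα' := hα i
    have e : ∑ j ∈ Finset.range s, η j * ⟪φ j i, γb j⟫ = 0 := by
      rw [← Finset.sum_range_add_sum_Ico _ (Nat.sub_le s ν)] at hα' ⊢
      have e1 : ∑ j ∈ Finset.range (s - ν), η j * ⟪φ j i, γb j⟫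
          = ∑ j ∈ Finset.range (s - ν), ⟪φ j i, γb j⟫ :=
        Finset.sum_congr rfl fun j hj => by
          rw [Finset.mem_range] at hj
          rw [hη₁ j (by omega), one_mul]
      have e2 : ∑ j ∈ Finset.Ico (s - ν) s, η j * ⟪φ j i, γb j⟫
          = ∑ j ∈ Finset.Ico (s - ν) s, ⟪φ j i, γb j⟫
            - ∑ j ∈ Finset.Ico (s - ν) s, h ^ (2 * (s - 1 - j)) * α j * ⟪φ j i, γb j⟫ := by
        rw [← Finset.sum_sub_distrib]
        refine Finset.sum_congr rfl fun j hj => ?_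
        rw [Finset.mem_Ico] at hj
        rw [hη₂ j hj.1 (by omega)]
        ring
      rw [e1, e2]
      linarith
    simp only [mul_assoc, ← Finset.mul_sum, e, mul_zero]
  rw [hzero] at hFTC
  linarith
end

section
/- (Theorem 3 of the paper, exact-conservation part.) Let m ≥ 1, d = 2m, let J ∈ ℝ^{d×d} be skew-symmetric, let s ≥ 1, k ≥ s, and let H : ℝ^d → ℝ be a polynomial with s · deg H ≤ 2k. Let (c_ℓ, b_ℓ)_{ℓ=1}^k be a quadrature on [0,1] exact for polynomials of degree ≤ 2k−1, let h > 0 and η₀, …, η_{s−1} ∈ ℝ. Suppose u : [0, h] → ℝ^d is a polynomial map of degree ≤ s satisfying u'(ch) = Σ_{j=0}^{s−1} P_j(c) η_j γ̂_j for all c ∈ [0,1], where γ̂_j = Σ_{ℓ=1}^k b_ℓ P_j(c_ℓ) J ∇H(u(c_ℓ h)). Then H(u(h)) = H(u(0)). -/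
open MeasureTheory Polynomial Matrix

/-- Theorem 3 of the paper, exact-conservation part.  If `J` is
skew-symmetric, `H` is a polynomial with `s · deg H ≤ 2k`, the quadrature is exact on
`Π_{2k-1}`, and `u ∈ Π_s` satisfies `u'(ch) = ∑_{j<s} P_j(c) η_j γ̂_j` with
`γ̂_j = ∑_ℓ b_ℓ P_j(c_ℓ) J ∇H(u(c_ℓ h))`, then `H(u(h)) = H(u(0))`. -/
theorem stmt12 (m : ℕ) (hm : 1 ≤ m)
    (J : Matrix (Fin (2 * m)) (Fin (2 * m)) ℝ) (hJ : Jᵀ = -J)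
    (s k : ℕ) (hs : 1 ≤ s) (hk : s ≤ k)
    (H : MvPolynomial (Fin (2 * m)) ℝ) (hH : s * H.totalDegree ≤ 2 * k)
    (Hf : EuclideanSpace ℝ (Fin (2 * m)) → ℝ)
    (hHf : ∀ y, Hf y = MvPolynomial.eval (fun i => y i) H)
    (c b : Fin k → ℝ) (hc : ∀ ℓ, c ℓ ∈ Set.Icc (0:ℝ) 1)
    (hquad : ∀ q : Polynomial ℝ, q.natDegree ≤ 2 * k - 1 →
      ∑ ℓ, b ℓ * q.eval (c ℓ) = ∫ x in (0:ℝ)..1, q.eval x)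
    (h : ℝ) (hh : 0 < h) (η : ℕ → ℝ)
    (u : ℝ → EuclideanSpace ℝ (Fin (2 * m)))
    (hupoly : ∃ a : Fin (s + 1) → EuclideanSpace ℝ (Fin (2 * m)),
      ∀ t : ℝ, u t = ∑ i : Fin (s + 1), t ^ (i : ℕ) • a i)
    (hu' : ∀ cc ∈ Set.Icc (0:ℝ) 1,
      HasDerivAt u
        (∑ j ∈ Finset.range s, legP j cc •
          (η j • ∑ ℓ, (b ℓ * legP j (c ℓ)) •
            Matrix.toEuclideanLin J (gradient Hf (u (c ℓ * h)))))
        (cc * h)) :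
    Hf (u h) = Hf (u 0) := by
  obtain ⟨a, ha⟩ := hupoly
  -- the polynomial coordinates of `x ↦ u (x * h)`
  set U : Fin (2 * m) → Polynomial ℝ := fun n =>
    ∑ i : Fin (s + 1), Polynomial.C (h ^ (i : ℕ) * a i n) * Polynomial.X ^ (i : ℕ) with hU
  have hUeval : ∀ n x, (U n).eval x = u (x * h) n := by
    intro n x
    simp only [hU, ha, Polynomial.eval_finsetSum, Polynomial.eval_mul, Polynomial.eval_C,
      Polynomial.eval_pow, Polynomial.eval_X, WithLp.ofLp_sum, Finset.sum_apply,
      PiLp.smul_apply, smul_eq_mul, mul_pow]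
    exact Finset.sum_congr rfl fun i _ => by ring
  have hUdeg : ∀ n, (U n).natDegree ≤ s := by
    intro n
    refine Polynomial.natDegree_sum_le_of_forall_le _ _ fun i _ => ?_
    exact (Polynomial.natDegree_C_mul_X_pow_le _ _).trans (by omega)
  set p : Polynomial ℝ := MvPolynomial.aeval U H with hp
  have hpdeg : p.natDegree ≤ 2 * k :=
    (MvPolynomial.aeval_natDegree_le H le_rfl U hUdeg).trans (by rw [mul_comm]; exact hH)
  have hpeval : ∀ x, p.eval x = Hf (u (x * h)) := by
    intro x
    rw [hHf, hp]
    simp only [← hUeval]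
    clear_value U
    clear hp p hpdeg hH hHf
    induction H using MvPolynomial.induction_on with
    | C r => simp
    | add f g hf hg => simp only [map_add, Polynomial.eval_add, hf, hg]
    | mul_X f i hf => simp only [map_mul, Polynomial.eval_mul, hf, MvPolynomial.aeval_X,
        MvPolynomial.eval_X]
  have hdiff : Differentiable ℝ Hf := by
    have : Hf = fun y => MvPolynomial.eval (fun i => y i) H := funext hHf
    rw [this]
    clear hp p hpdeg hH hHf hpeval this
    induction H using MvPolynomial.induction_on with
    | C r => simp
    | add f g hf hg => simp only [map_add]; exact hf.add hg
    | mul_X f i hf =>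
      simp only [map_mul, MvPolynomial.eval_X]
      exact hf.mul (by fun_prop)
  set G : Fin k → EuclideanSpace ℝ (Fin (2 * m)) := fun ℓ => gradient Hf (u (c ℓ * h)) with hG
  set g : ℕ → EuclideanSpace ℝ (Fin (2 * m)) := fun j => ∑ ℓ, (b ℓ * legP j (c ℓ)) • G ℓ with hg
  have hder : ∀ ℓ, p.derivative.eval (c ℓ) =
      h * inner ℝ (G ℓ) (∑ j ∈ Finset.range s, legP j (c ℓ) •
        (η j • Matrix.toEuclideanLin J (g j))) := by
    intro ℓ
    have h1 := hu' (c ℓ) (hc ℓ)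
    have h2 : HasDerivAt (fun x : ℝ => x * h) h (c ℓ) := by
      simpa using (hasDerivAt_id (c ℓ)).mul_const h
    have h3 := HasDerivAt.scomp (c ℓ) h1 h2
    have h4 := (hdiff (u (c ℓ * h))).hasGradientAt.hasFDerivAt.comp_hasDerivAt (c ℓ) h3
    have h5 : HasDerivAt (fun x => p.eval x) (p.derivative.eval (c ℓ)) (c ℓ) := p.hasDerivAt _
    have h6 : (fun x => p.eval x) = Hf ∘ (u ∘ fun x : ℝ => x * h) := funext hpeval
    rw [h6] at h5
    rw [h5.unique h4]
    rw [InnerProductSpace.toDual_apply_apply, real_inner_smul_right]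
    simp only [hg, map_sum, map_smul, hG]
  have hskew : ∀ v : EuclideanSpace ℝ (Fin (2 * m)),
      inner ℝ v (Matrix.toEuclideanLin J v) = (0 : ℝ) := by
    intro v
    have key : v.ofLp ⬝ᵥ (J *ᵥ v.ofLp) = 0 := by
      have e : v.ofLp ⬝ᵥ (J *ᵥ v.ofLp) = - (v.ofLp ⬝ᵥ (J *ᵥ v.ofLp)) := by
        conv_lhs => rw [dotProduct_mulVec, ← mulVec_transpose, hJ, dotProduct_comm, neg_mulVec,
          dotProduct_neg]
      linarith
    rw [EuclideanSpace.inner_eq_star_dotProduct]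
    simpa [dotProduct_comm] using key
  have hint : ∫ x in (0:ℝ)..1, p.derivative.eval x = p.eval 1 - p.eval 0 :=
    intervalIntegral.integral_eq_sub_of_hasDerivAt (fun x _ => p.hasDerivAt x)
      (p.derivative.continuous.intervalIntegrable _ _)
  have hq := hquad p.derivative ((Polynomial.natDegree_derivative_le p).trans (by omega))
  have hzero : ∑ ℓ, b ℓ * p.derivative.eval (c ℓ) = 0 := by
    have : ∑ ℓ, b ℓ * p.derivative.eval (c ℓ) =
        ∑ j ∈ Finset.range s, h * η j * inner ℝ (g j) (Matrix.toEuclideanLin J (g j)) := by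
      have e : ∀ j, inner ℝ (g j) (Matrix.toEuclideanLin J (g j)) =
          ∑ ℓ, b ℓ * legP j (c ℓ) * inner ℝ (G ℓ) (Matrix.toEuclideanLin J (g j)) := by
        intro j
        generalize Matrix.toEuclideanLin J (g j) = w
        simp only [hg, sum_inner, real_inner_smul_left]
      simp only [hder, inner_sum, real_inner_smul_right, e, Finset.mul_sum]
      rw [Finset.sum_comm]
      exact Finset.sum_congr rfl fun j _ => Finset.sum_congr rfl fun ℓ _ => by ring
    rw [this]
    simp [hskew]
  rw [hzero, hint, hpeval, hpeval] at hq
  simp only [one_mul, zero_mul] at hq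
  linarith
end
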